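/- arXiv:1612.08013 — 3 statements merged into one kernel-verified Lean document; each statement's English description precedes it below -/
import Mathlib

section
/- Let f^N and g be functions in the velocity span, continuous on Ω̄, and let E^N : Ω_x → ℝ be bounded and measurable. Then ∫_Ω g(x,v)·R^N(x,v) dv dx = −(1/2)·∫_{Ω_x} E^N(x)·[ f^N(x,v_max)·g(x,v_max) − f^N(x,v_min)·g(x,v_min) ] dx. -/
open MeasureTheory Real

/-- Reproducing property of the kernel of the orthonormal family. -/
lemma repro_kernel (vmin vmax : ℝ) (NS : ℕ) (φ : Fin NS → ℝ → ℝ)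
    (hint : ∀ n m, IntegrableOn (fun v => φ n v * φ m v) (Set.Ioo vmin vmax))
    (hortho : ∀ n m : Fin NS,
      (∫ v in Set.Ioo vmin vmax, φ n v * φ m v) = if n = m then (1 : ℝ) else 0)
    (c d : Fin NS → ℝ) :
    IntegrableOn (fun v => (∑ n, c n * φ n v) * (∑ m, d m * φ m v)) (Set.Ioo vmin vmax) ∧
    (∫ v in Set.Ioo vmin vmax, (∑ n, c n * φ n v) * (∑ m, d m * φ m v)) = ∑ n, c n * d n := by
  have e : (fun v => (∑ n, c n * φ n v) * (∑ m, d m * φ m v))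
      = fun v => ∑ n, ∑ m, (c n * d m) * (φ n v * φ m v) := by
    funext v
    rw [Finset.sum_mul_sum]
    refine Finset.sum_congr rfl fun n _ => Finset.sum_congr rfl fun m _ => by ring
  have hi : ∀ n m, Integrable (fun v => (c n * d m) * (φ n v * φ m v))
      (volume.restrict (Set.Ioo vmin vmax)) := fun n m => (hint n m).const_mul _
  rw [e]
  refine ⟨integrable_finsetSum _ fun n _ => integrable_finsetSum _ fun m _ => hi n m, ?_⟩
  rw [integral_finsetSum _ fun n _ => integrable_finsetSum _ fun m _ => hi n m]
  refine Finset.sum_congr rfl fun n _ => ?_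
  rw [integral_finsetSum _ fun m _ => hi n m]
  simp [integral_const_mul, hortho]

/-- For `f^N`, `g` in the velocity span (continuous on `Ω̄`) and `E^N`
bounded measurable, the integral of `g·R^N` over `Ω` equals the boundary expression
`−(1/2)∫_{Ω_x} E^N (f^N(·,v_max) g(·,v_max) − f^N(·,v_min) g(·,v_min))`. -/
theorem stmt2 (vmin vmax : ℝ) (hv : vmin < vmax)
    (NS : ℕ) (hNS : 1 ≤ NS) (φ : Fin NS → ℝ → ℝ)
    (hφc : ∀ n, ContinuousOn (φ n) (Set.Icc vmin vmax))
    (hortho : ∀ n m : Fin NS,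
      (∫ v in Set.Ioo vmin vmax, φ n v * φ m v) = if n = m then (1 : ℝ) else 0)
    (fN g : ℝ × ℝ → ℝ)
    (hfNc : ContinuousOn fN (Set.Icc (0 : ℝ) (2 * π) ×ˢ Set.Icc vmin vmax))
    (hgc : ContinuousOn g (Set.Icc (0 : ℝ) (2 * π) ×ˢ Set.Icc vmin vmax))
    (hfNspan : ∀ x ∈ Set.Ico (0 : ℝ) (2 * π), ∃ c : Fin NS → ℝ,
      ∀ v ∈ Set.Icc vmin vmax, fN (x, v) = ∑ n, c n * φ n v)
    (hgspan : ∀ x ∈ Set.Ico (0 : ℝ) (2 * π), ∃ c : Fin NS → ℝ,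
      ∀ v ∈ Set.Icc vmin vmax, g (x, v) = ∑ n, c n * φ n v)
    (EN : ℝ → ℝ) (hENm : Measurable EN)
    (hENb : ∃ C, ∀ x ∈ Set.Ico (0 : ℝ) (2 * π), |EN x| ≤ C)
    (RN : ℝ × ℝ → ℝ)
    (hRN : ∀ x v, RN (x, v) = -(1 / 2) * EN x *
      (fN (x, vmax) * (∑ n, φ n vmax * φ n v) - fN (x, vmin) * (∑ n, φ n vmin * φ n v))) :
    (∫ x in Set.Ioo (0 : ℝ) (2 * π), ∫ v in Set.Ioo vmin vmax, g (x, v) * RN (x, v))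
      = -(1 / 2) * ∫ x in Set.Ioo (0 : ℝ) (2 * π),
          EN x * (fN (x, vmax) * g (x, vmax) - fN (x, vmin) * g (x, vmin)) := by
  have hint : ∀ n m, IntegrableOn (fun v => φ n v * φ m v) (Set.Ioo vmin vmax) := fun n m =>
    (((hφc n).mul (hφc m)).integrableOn_compact isCompact_Icc).mono_set Set.Ioo_subset_Icc_self
  rw [← integral_const_mul]
  refine setIntegral_congr_fun measurableSet_Ioo fun x hx => ?_
  obtain ⟨c, hc⟩ := hgspan x ⟨hx.1.le, hx.2⟩
  obtain ⟨i1, k1⟩ := repro_kernel vmin vmax NS φ hint hortho c (fun n => φ n vmax)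
  obtain ⟨i2, k2⟩ := repro_kernel vmin vmax NS φ hint hortho c (fun n => φ n vmin)
  have h1 : (∫ v in Set.Ioo vmin vmax, g (x, v) * RN (x, v))
      = ∫ v in Set.Ioo vmin vmax,
        ((-(1 / 2) * EN x * fN (x, vmax)) *
            ((∑ n, c n * φ n v) * (∑ n, φ n vmax * φ n v)) -
          (-(1 / 2) * EN x * fN (x, vmin)) *
            ((∑ n, c n * φ n v) * (∑ n, φ n vmin * φ n v))) := by
    refine setIntegral_congr_fun measurableSet_Ioo fun v hv' => ?_
    simp only [hRN, hc v (Set.Ioo_subset_Icc_self hv')]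
    ring
  rw [h1, integral_sub (i1.const_mul _) (i2.const_mul _), integral_const_mul, integral_const_mul,
    k1, k2, ← hc vmax ⟨hv.le, le_rfl⟩, ← hc vmin ⟨le_rfl, hv.le⟩]
  ring
end

section
/- Let f^N be a function in the velocity span, continuous on Ω̄, and let E^N : Ω_x → ℝ be bounded and measurable. Then ∫_Ω f^N(x,v)·R^N(x,v) dv dx = −(1/2)·∫_{Ω_x} E^N(x)·[ f^N(x,v_max)² − f^N(x,v_min)² ] dx. -/
open MeasureTheory Real

/-- For `f^N` in the velocity span (continuous on `Ω̄`) and `E^N`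
bounded measurable, `∫_Ω f^N·R^N = −(1/2)∫_{Ω_x} E^N (f^N(·,v_max)² − f^N(·,v_min)²)`. -/
theorem stmt3 (vmin vmax : ℝ) (hv : vmin < vmax)
    (NS : ℕ) (hNS : 1 ≤ NS) (φ : Fin NS → ℝ → ℝ)
    (hφc : ∀ n, ContinuousOn (φ n) (Set.Icc vmin vmax))
    (hortho : ∀ n m : Fin NS,
      (∫ v in Set.Ioo vmin vmax, φ n v * φ m v) = if n = m then (1 : ℝ) else 0)
    (fN : ℝ × ℝ → ℝ)
    (hfNc : ContinuousOn fN (Set.Icc (0 : ℝ) (2 * π) ×ˢ Set.Icc vmin vmax))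
    (hfNspan : ∀ x ∈ Set.Ico (0 : ℝ) (2 * π), ∃ c : Fin NS → ℝ,
      ∀ v ∈ Set.Icc vmin vmax, fN (x, v) = ∑ n, c n * φ n v)
    (EN : ℝ → ℝ) (hENm : Measurable EN)
    (hENb : ∃ C, ∀ x ∈ Set.Ico (0 : ℝ) (2 * π), |EN x| ≤ C)
    (RN : ℝ × ℝ → ℝ)
    (hRN : ∀ x v, RN (x, v) = -(1 / 2) * EN x *
      (fN (x, vmax) * (∑ n, φ n vmax * φ n v) - fN (x, vmin) * (∑ n, φ n vmin * φ n v))) :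
    (∫ x in Set.Ioo (0 : ℝ) (2 * π), ∫ v in Set.Ioo vmin vmax, fN (x, v) * RN (x, v))
      = -(1 / 2) * ∫ x in Set.Ioo (0 : ℝ) (2 * π),
          EN x * ((fN (x, vmax)) ^ 2 - (fN (x, vmin)) ^ 2) := by
  have key : ∀ c a : Fin NS → ℝ,
      (∫ v in Set.Ioo vmin vmax, (∑ n, c n * φ n v) * (∑ m, a m * φ m v)) = ∑ n, c n * a n := by
    intro c a
    have hint : ∀ n m : Fin NS, Integrable (fun v => (c n * a m) * (φ n v * φ m v))
        (volume.restrict (Set.Ioo vmin vmax)) := by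
      intro n m
      have h1 : IntegrableOn (fun v => φ n v * φ m v) (Set.Icc vmin vmax) :=
        ((hφc n).mul (hφc m)).integrableOn_compact isCompact_Icc
      exact (h1.mono_set Set.Ioo_subset_Icc_self).const_mul _
    have h2 : ∀ v, (∑ n, c n * φ n v) * (∑ m, a m * φ m v)
        = ∑ n, ∑ m, (c n * a m) * (φ n v * φ m v) := by
      intro v
      rw [Finset.sum_mul_sum]
      exact Finset.sum_congr rfl fun n _ => Finset.sum_congr rfl fun m _ => by ring
    simp_rw [h2]
    rw [integral_finsetSum _ fun n _ => integrable_finsetSum _ fun m _ => hint n m]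
    refine Finset.sum_congr rfl fun n _ => ?_
    rw [integral_finsetSum _ fun m _ => hint n m]
    simp_rw [integral_const_mul, hortho]
    simp
  rw [← integral_const_mul]
  refine setIntegral_congr_fun measurableSet_Ioo fun x hx => ?_
  obtain ⟨c, hc⟩ := hfNspan x ⟨hx.1.le, hx.2⟩
  have hmax := hc vmax ⟨hv.le, le_rfl⟩
  have hmin := hc vmin ⟨le_rfl, hv.le⟩
  have h3 : ∀ v ∈ Set.Ioo vmin vmax, fN (x, v) * RN (x, v) = (∑ n, c n * φ n v) *
      (∑ m, (-(1 / 2) * EN x * (fN (x, vmax) * φ m vmax - fN (x, vmin) * φ m vmin)) * φ m v) := by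
    intro v hvv
    rw [hRN, hc v (Set.Ioo_subset_Icc_self hvv)]
    congr 1
    rw [Finset.mul_sum, Finset.mul_sum, ← Finset.sum_sub_distrib, Finset.mul_sum]
    exact Finset.sum_congr rfl fun m _ => by ring
  have h4 : (∑ n, c n * (-(1 / 2) * EN x * (fN (x, vmax) * φ n vmax - fN (x, vmin) * φ n vmin)))
      = -(1 / 2) * EN x * (fN (x, vmax) * (∑ n, c n * φ n vmax)
        - fN (x, vmin) * (∑ n, c n * φ n vmin)) := by
    rw [Finset.mul_sum, Finset.mul_sum, ← Finset.sum_sub_distrib, Finset.mul_sum]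
    exact Finset.sum_congr rfl fun m _ => by ring
  change (∫ v in Set.Ioo vmin vmax, fN (x, v) * RN (x, v)) = _
  rw [setIntegral_congr_fun measurableSet_Ioo h3, key, h4, ← hmax, ← hmin]
  ring
end

section
/- Let f^N and g be continuously differentiable functions on Ω̄ that both lie in the velocity span, are 2π-periodic in x (f^N(0,v) = f^N(2π,v) and g(0,v) = g(2π,v) for all v), and let E^N : [0,2π] → ℝ be continuous with E^N(0) = E^N(2π). Writing F^N(x,v) = (v, −E^N(x)) and ∇ = (∂/∂x, ∂/∂v), it holds that ∫_Ω g·(F^N·∇f^N) dv dx + ∫_Ω f^N·(F^N·∇g) dv dx = 2·∫_Ω g·R^N dv dx. -/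
open MeasureTheory Real

lemma aux_repro (vmin vmax : ℝ) (NS : ℕ) (φ : Fin NS → ℝ → ℝ)
    (hφc : ∀ n, ContinuousOn (φ n) (Set.Icc vmin vmax))
    (hortho : ∀ n m : Fin NS,
      (∫ v in Set.Ioo vmin vmax, φ n v * φ m v) = if n = m then (1 : ℝ) else 0)
    (c : Fin NS → ℝ) (m : Fin NS) :
    ∫ v in Set.Ioo vmin vmax, (∑ n, c n * φ n v) * φ m v = c m := by
  have hint : ∀ n m : Fin NS, IntegrableOn (fun v => φ n v * φ m v) (Set.Ioo vmin vmax) :=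
    fun n m => (((hφc n).mul (hφc m)).integrableOn_Icc).mono_set Set.Ioo_subset_Icc_self
  simp_rw [Finset.sum_mul, mul_assoc]
  rw [integral_finsetSum _ (fun n _ => (hint n m).const_mul (c n))]
  simp_rw [integral_const_mul, hortho]
  simp

lemma aux_kernel (vmin vmax : ℝ) (NS : ℕ) (φ : Fin NS → ℝ → ℝ)
    (hφc : ∀ n, ContinuousOn (φ n) (Set.Icc vmin vmax))
    (hortho : ∀ n m : Fin NS,
      (∫ v in Set.Ioo vmin vmax, φ n v * φ m v) = if n = m then (1 : ℝ) else 0)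
    (c d : Fin NS → ℝ) :
    ∫ v in Set.Ioo vmin vmax, (∑ n, c n * φ n v) * (∑ n, d n * φ n v) = ∑ n, c n * d n := by
  have hint : ∀ m : Fin NS,
      IntegrableOn (fun v => (∑ n, c n * φ n v) * φ m v) (Set.Ioo vmin vmax) := fun m =>
    (ContinuousOn.integrableOn_Icc ((continuousOn_finsetSum _
      (fun n _ => continuousOn_const.mul (hφc n))).mul (hφc m))).mono_set Set.Ioo_subset_Icc_self
  have h : ∀ v, (∑ n, c n * φ n v) * (∑ m, d m * φ m v)
      = ∑ m, d m * ((∑ n, c n * φ n v) * φ m v) := by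
    intro v
    rw [Finset.mul_sum]
    exact Finset.sum_congr rfl fun m _ => by ring
  simp_rw [h]
  rw [integral_finsetSum _ (fun m _ => (hint m).const_mul (d m))]
  simp_rw [integral_const_mul, aux_repro vmin vmax NS φ hφc hortho]
  exact Finset.sum_congr rfl fun m _ => by ring

lemma aux_dx (H : ℝ × ℝ → ℝ) (hH : ContDiff ℝ 1 H) (x v : ℝ) :
    HasDerivAt (fun y => H (y, v)) (fderiv ℝ H (x, v) (1, 0)) x := by
  have h1 : HasFDerivAt H (fderiv ℝ H (x, v)) (x, v) :=
    (hH.differentiable one_ne_zero _).hasFDerivAt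
  exact h1.comp_hasDerivAt x ((hasDerivAt_id x).prodMk (hasDerivAt_const x v))

lemma aux_dv (H : ℝ × ℝ → ℝ) (hH : ContDiff ℝ 1 H) (x v : ℝ) :
    HasDerivAt (fun y => H (x, y)) (fderiv ℝ H (x, v) (0, 1)) v := by
  have h1 : HasFDerivAt H (fderiv ℝ H (x, v)) (x, v) :=
    (hH.differentiable one_ne_zero _).hasFDerivAt
  exact h1.comp_hasDerivAt v ((hasDerivAt_const v x).prodMk (hasDerivAt_id v))

lemma aux_Ioo (a b : ℝ) (h : a ≤ b) (f : ℝ → ℝ) :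
    ∫ x in Set.Ioo a b, f x = ∫ x in a..b, f x := by
  rw [intervalIntegral.integral_of_le h, integral_Ioc_eq_integral_Ioo]

lemma aux_swap (a b c d : ℝ) (hab : a ≤ b) (hcd : c ≤ d) (F : ℝ → ℝ → ℝ)
    (hF : Continuous (Function.uncurry F)) :
    ∫ x in a..b, ∫ v in c..d, F x v = ∫ v in c..d, ∫ x in a..b, F x v := by
  simp_rw [intervalIntegral.integral_of_le hab, intervalIntegral.integral_of_le hcd]
  apply integral_integral_swap
  rw [Measure.prod_restrict]
  have : IntegrableOn (Function.uncurry F) (Set.Icc a b ×ˢ Set.Icc c d)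
      ((volume : Measure ℝ).prod volume) :=
    hF.continuousOn.integrableOn_compact (isCompact_Icc.prod isCompact_Icc)
  exact this.mono_set (Set.prod_mono Set.Ioc_subset_Icc_self Set.Ioc_subset_Icc_self)


/-- For `f^N`, `g` continuously differentiable, in the velocity span and
2π-periodic in `x`, and `E^N` continuous periodic, with `F^N = (v, −E^N)`,
`∫_Ω g (F^N·∇f^N) + ∫_Ω f^N (F^N·∇g) = 2 ∫_Ω g R^N`. -/
theorem stmt4 (vmin vmax : ℝ) (hv : vmin < vmax)
    (NS : ℕ) (hNS : 1 ≤ NS) (φ : Fin NS → ℝ → ℝ)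
    (hφc : ∀ n, ContinuousOn (φ n) (Set.Icc vmin vmax))
    (hortho : ∀ n m : Fin NS,
      (∫ v in Set.Ioo vmin vmax, φ n v * φ m v) = if n = m then (1 : ℝ) else 0)
    (fN g : ℝ × ℝ → ℝ)
    (hfN : ContDiff ℝ 1 fN) (hg : ContDiff ℝ 1 g)
    (hfNspan : ∀ x ∈ Set.Ico (0 : ℝ) (2 * π), ∃ c : Fin NS → ℝ,
      ∀ v ∈ Set.Icc vmin vmax, fN (x, v) = ∑ n, c n * φ n v)
    (hgspan : ∀ x ∈ Set.Ico (0 : ℝ) (2 * π), ∃ c : Fin NS → ℝ,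
      ∀ v ∈ Set.Icc vmin vmax, g (x, v) = ∑ n, c n * φ n v)
    (hfNper : ∀ v ∈ Set.Icc vmin vmax, fN (0, v) = fN (2 * π, v))
    (hgper : ∀ v ∈ Set.Icc vmin vmax, g (0, v) = g (2 * π, v))
    (EN : ℝ → ℝ) (hENc : Continuous EN) (hENper : EN 0 = EN (2 * π))
    (RN : ℝ × ℝ → ℝ)
    (hRN : ∀ x v, RN (x, v) = -(1 / 2) * EN x *
      (fN (x, vmax) * (∑ n, φ n vmax * φ n v) - fN (x, vmin) * (∑ n, φ n vmin * φ n v))) :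
    (∫ x in Set.Ioo (0 : ℝ) (2 * π), ∫ v in Set.Ioo vmin vmax,
        g (x, v) * (v * fderiv ℝ fN (x, v) (1, 0) - EN x * fderiv ℝ fN (x, v) (0, 1)))
      + (∫ x in Set.Ioo (0 : ℝ) (2 * π), ∫ v in Set.Ioo vmin vmax,
        fN (x, v) * (v * fderiv ℝ g (x, v) (1, 0) - EN x * fderiv ℝ g (x, v) (0, 1)))
      = 2 * ∫ x in Set.Ioo (0 : ℝ) (2 * π), ∫ v in Set.Ioo vmin vmax,
          g (x, v) * RN (x, v) := by
  have hpi : (0 : ℝ) ≤ 2 * π := by positivity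
  have cf := hfN.continuous
  have cg := hg.continuous
  have cdf : ∀ w : ℝ × ℝ, Continuous fun p => fderiv ℝ fN p w := fun w =>
    (hfN.continuous_fderiv one_ne_zero).clm_apply continuous_const
  have cdg : ∀ w : ℝ × ℝ, Continuous fun p => fderiv ℝ g p w := fun w =>
    (hg.continuous_fderiv one_ne_zero).clm_apply continuous_const
  have cf1 := cdf (1, 0)
  have cf2 := cdf (0, 1)
  have cg1 := cdg (1, 0)
  have cg2 := cdg (0, 1)
  -- right-hand side
  have hR : ∀ x ∈ Set.Ioo (0 : ℝ) (2 * π), ∫ v in Set.Ioo vmin vmax, g (x, v) * RN (x, v)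
      = -(1 / 2) * EN x * (fN (x, vmax) * g (x, vmax) - fN (x, vmin) * g (x, vmin)) := by
    intro x hx
    obtain ⟨c, hc⟩ := hgspan x ⟨hx.1.le, hx.2⟩
    have e : ∀ v ∈ Set.Ioo vmin vmax, g (x, v) * RN (x, v) = (∑ n, c n * φ n v) *
        (∑ n, (-(1 / 2) * EN x * (fN (x, vmax) * φ n vmax - fN (x, vmin) * φ n vmin)) * φ n v) := by
      intro v hv'
      rw [hc v ⟨hv'.1.le, hv'.2.le⟩, hRN]
      congr 1
      rw [Finset.mul_sum, Finset.mul_sum, ← Finset.sum_sub_distrib, Finset.mul_sum]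
      exact Finset.sum_congr rfl fun n _ => by ring
    rw [setIntegral_congr_fun measurableSet_Ioo e, aux_kernel vmin vmax NS φ hφc hortho,
      hc vmax ⟨hv.le, le_rfl⟩, hc vmin ⟨le_rfl, hv.le⟩]
    rw [Finset.mul_sum, Finset.mul_sum, ← Finset.sum_sub_distrib, Finset.mul_sum]
    exact Finset.sum_congr rfl fun n _ => by ring
  rw [setIntegral_congr_fun measurableSet_Ioo hR]
  simp_rw [aux_Ioo vmin vmax hv.le, aux_Ioo 0 (2 * π) hpi]
  -- the transport part
  have cT : Continuous (Function.uncurry fun x v : ℝ => v * (g (x, v) * fderiv ℝ fN (x, v) (1, 0)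
      + fN (x, v) * fderiv ℝ g (x, v) (1, 0))) := by
    unfold Function.uncurry; fun_prop
  have hT : ∫ x in (0 : ℝ)..(2 * π), ∫ v in vmin..vmax,
      v * (g (x, v) * fderiv ℝ fN (x, v) (1, 0) + fN (x, v) * fderiv ℝ g (x, v) (1, 0)) = 0 := by
    rw [aux_swap 0 (2 * π) vmin vmax hpi hv.le _ cT]
    · rw [intervalIntegral.integral_congr (g := fun _ => (0 : ℝ))]
      · simp
      · intro v hv'
        rw [Set.uIcc_of_le hv.le] at hv'
        have := intervalIntegral.integral_eq_sub_of_hasDerivAt (a := 0) (b := 2 * π)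
          (f := fun x => v * (g (x, v) * fN (x, v)))
          (f' := fun x => v * (g (x, v) * fderiv ℝ fN (x, v) (1, 0)
            + fN (x, v) * fderiv ℝ g (x, v) (1, 0)))
          (fun x _ => by
            have := ((aux_dx g hg x v).mul (aux_dx fN hfN x v)).const_mul v
            exact this.congr_deriv (by ring))
          ((cT.comp (Continuous.prodMk_left v)).intervalIntegrable _ _)
        simp only [this, hfNper v hv', hgper v hv', sub_self]
  have hV : ∀ x, ∫ v in vmin..vmax,
      (g (x, v) * fderiv ℝ fN (x, v) (0, 1) + fN (x, v) * fderiv ℝ g (x, v) (0, 1))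
      = g (x, vmax) * fN (x, vmax) - g (x, vmin) * fN (x, vmin) := by
    intro x
    refine intervalIntegral.integral_eq_sub_of_hasDerivAt
      (f := fun v => g (x, v) * fN (x, v)) (fun v _ => ?_) ?_
    · have := (aux_dv g hg x v).mul (aux_dv fN hfN x v)
      exact this.congr_deriv (by ring)
    · exact Continuous.intervalIntegrable (by fun_prop) _ _
  have ii : ∀ F : ℝ → ℝ → ℝ, Continuous (Function.uncurry F) →
      Continuous fun x => ∫ v in vmin..vmax, F x v := fun F hF =>
    intervalIntegral.continuous_parametric_intervalIntegral_of_continuous' hF vmin vmax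
  have c1 := ii (fun x v => g (x, v) * (v * fderiv ℝ fN (x, v) (1, 0)
    - EN x * fderiv ℝ fN (x, v) (0, 1))) (by unfold Function.uncurry; fun_prop)
  have c2 := ii (fun x v => fN (x, v) * (v * fderiv ℝ g (x, v) (1, 0)
    - EN x * fderiv ℝ g (x, v) (0, 1))) (by unfold Function.uncurry; fun_prop)
  have c3 := ii _ cT
  rw [← intervalIntegral.integral_add (c1.intervalIntegrable _ _) (c2.intervalIntegrable _ _),
    ← intervalIntegral.integral_const_mul]
  have hpt : ∀ x, (∫ v in vmin..vmax, g (x, v) * (v * fderiv ℝ fN (x, v) (1, 0)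
        - EN x * fderiv ℝ fN (x, v) (0, 1)))
      + (∫ v in vmin..vmax, fN (x, v) * (v * fderiv ℝ g (x, v) (1, 0)
        - EN x * fderiv ℝ g (x, v) (0, 1)))
      = (∫ v in vmin..vmax, v * (g (x, v) * fderiv ℝ fN (x, v) (1, 0)
          + fN (x, v) * fderiv ℝ g (x, v) (1, 0)))
        + 2 * (-(1 / 2) * EN x * (fN (x, vmax) * g (x, vmax) - fN (x, vmin) * g (x, vmin))) := by
    intro x
    have e : 2 * (-(1 / 2) * EN x * (fN (x, vmax) * g (x, vmax) - fN (x, vmin) * g (x, vmin)))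
        = (-EN x) * (g (x, vmax) * fN (x, vmax) - g (x, vmin) * fN (x, vmin)) := by ring
    rw [e, ← hV x, ← intervalIntegral.integral_const_mul,
      ← intervalIntegral.integral_add, ← intervalIntegral.integral_add]
    · congr 1
      ext v
      ring
    all_goals exact Continuous.intervalIntegrable (by fun_prop) _ _
  simp_rw [hpt]
  rw [intervalIntegral.integral_add, hT, zero_add]
  · exact c3.intervalIntegrable _ _
  · exact Continuous.intervalIntegrable (by fun_prop) _ _
end
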